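/- Let α, β ∈ [0,1], f ∈ C^α(ℝ^d), and let δ > 0 satisfy δ ∈ [(α−β)/2, 1]. Then there is a constant N depending only on H, c, α, β, δ, d such that for all 0 < s ≤ t ≤ 1, ‖P_t^H f − P_s^H f‖_{C^β} ≤ N s^{H(α−β) − 2Hδ} |t^{2H} − s^{2H}|^δ ‖f‖_{C^α}. -/

import Mathlib

open MeasureTheory Filter Set

noncomputable section

/-- `ℝ^d` as Euclidean space. -/
abbrev Euc (d : ℕ) := EuclideanSpace ℝ (Fin d)

/-- Gaussian density with covariance `σ` times the identity on `ℝ^d`. -/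
def gaussDensity (d : ℕ) (σ : ℝ) (x : Euc d) : ℝ :=
  (2 * Real.pi * σ) ^ (-(d : ℝ) / 2) * Real.exp (-‖x‖ ^ 2 / (2 * σ))

/-- The Gaussian convolution operator `P_t^H f = p_{c t^{2H}} ∗ f`. -/
def heatP (d : ℕ) (c H t : ℝ) (f : Euc d → ℝ) (x : Euc d) : ℝ :=
  ∫ y, gaussDensity d (c * t ^ (2 * H)) (x - y) * f y

/-- The `C^α` norm (`α ∈ [0,1]`): supremum norm plus `α`-Hölder seminorm.
(For `α = 0` this is comparable to the supremum norm.) -/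
def holderNorm (d : ℕ) (α : ℝ) (f : Euc d → ℝ) : ℝ :=
  (⨆ x, |f x|) +
    ⨆ q : {q : Euc d × Euc d // q.1 ≠ q.2}, |f q.1.1 - f q.1.2| / ‖q.1.1 - q.1.2‖ ^ α

end

/-!
After rescaling space by `√(c s^{2H})` the smaller variance becomes `1` and the larger one
`σ = (t / s)^{2H}`. For `σ ≤ 2` the mean value theorem bounds the increment `p_σ - p_1` by
`(σ - 1)` times a Gaussian envelope, and its translates by `‖h‖` more, so
`(p_σ - p_1) ⋆ f` is small both in supremum and in Lipschitz norm; interpolating gives every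
`β ∈ [0, 1]`, and `σ - 1 ≤ (σ - 1)^δ`. For `σ ≥ 2` no cancellation is needed: `p_σ ⋆ f` and
`p_1 ⋆ f` are both compared with `f`. When `β ≤ α`, interpolating the resulting supremum bound
`σ^{α/2}` with the fact that convolution does not increase the `α`-Hölder seminorm costs
`σ^{(α - β) / 2} ≤ σ^δ ≤ 2 (σ - 1)^δ`; when `α ≤ β`, each convolution is separately
`β`-Hölder because the Gaussian smooths.
-/

open scoped Convolution

section RealPowers

lemma rpow_le_rpow_sub_mul_rpow {r R β γ : ℝ} (hr : 0 ≤ r) (hrR : r ≤ R) (hβ : 0 ≤ β)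
    (hβγ : β ≤ γ) : r ^ γ ≤ R ^ (γ - β) * r ^ β :=
  calc r ^ γ = r ^ (γ - β) * r ^ β := by
        rw [← Real.rpow_add_of_nonneg hr (sub_nonneg.2 hβγ) hβ, sub_add_cancel]
    _ ≤ R ^ (γ - β) * r ^ β := by gcongr

lemma le_mul_rpow_of_le_of_le {q C r R β γ : ℝ} (hC : 0 ≤ C) (hr : 0 ≤ r) (hR : 0 ≤ R)
    (hβ : 0 ≤ β) (hβγ : β ≤ γ) (hfar : q ≤ C * R ^ γ) (hnear : r ≤ R → q ≤ C * r ^ γ) :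
    q ≤ C * (R ^ (γ - β) * r ^ β) := by
  rcases le_total r R with h | h
  · exact (hnear h).trans (by gcongr; exact rpow_le_rpow_sub_mul_rpow hr h hβ hβγ)
  · have hR_split : R ^ γ = R ^ (γ - β) * R ^ β := by
      rw [← Real.rpow_add_of_nonneg hR (sub_nonneg.2 hβγ) hβ, sub_add_cancel]
    rw [hR_split] at hfar
    exact hfar.trans (by gcongr)

lemma rpow_le_two_mul_sub_one_rpow {σ γ δ : ℝ} (hσ : 2 ≤ σ) (hγδ : γ ≤ δ) (hδ0 : 0 ≤ δ)
    (hδ1 : δ ≤ 1) : σ ^ γ ≤ 2 * (σ - 1) ^ δ :=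
  calc σ ^ γ ≤ σ ^ δ := Real.rpow_le_rpow_of_exponent_le (by linarith) hγδ
    _ ≤ (2 * (σ - 1)) ^ δ := by gcongr; linarith
    _ = 2 ^ δ * (σ - 1) ^ δ := Real.mul_rpow zero_le_two (by linarith)
    _ ≤ 2 * (σ - 1) ^ δ := by
        have : 0 ≤ σ - 1 := by linarith
        gcongr
        exact Real.rpow_le_self_of_one_le one_le_two hδ1

end RealPowers

section GaussianProfile

/-- The Gaussian density as a function of the variance `σ` and of `u = ‖x‖²`, with the power
`p = -d/2` of the normalisation left free. -/
noncomputable def gaussProfile (p σ u : ℝ) : ℝ :=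
  (2 * Real.pi * σ) ^ p * Real.exp (-u / (2 * σ))

/-- The derivative of `gaussProfile` with respect to the variance. -/
noncomputable def gaussProfileDeriv (p σ u : ℝ) : ℝ :=
  gaussProfile p σ u * (p / σ + u / (2 * σ ^ 2))

variable {p σ u : ℝ}

lemma gaussDensity_eq_gaussProfile (d : ℕ) (σ : ℝ) (x : Euc d) :
    gaussDensity d σ x = gaussProfile (-(d : ℝ) / 2) σ (‖x‖ ^ 2) := rfl

lemma gaussProfile_nonneg (hσ : 0 ≤ σ) : 0 ≤ gaussProfile p σ u := by
  unfold gaussProfile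
  positivity

lemma hasDerivAt_gaussProfile (p σ u : ℝ) :
    HasDerivAt (gaussProfile p σ) (gaussProfile p σ u * (-1 / (2 * σ))) u := by
  have hexponent : HasDerivAt (fun u : ℝ => -u / (2 * σ)) (-1 / (2 * σ)) u :=
    (hasDerivAt_id u).neg.div_const (2 * σ)
  exact (hexponent.exp.const_mul ((2 * Real.pi * σ) ^ p)).congr_deriv (by
    unfold gaussProfile; ring)

lemma hasDerivAt_gaussProfile_variance (p u : ℝ) (hσ : 0 < σ) :
    HasDerivAt (fun σ => gaussProfile p σ u) (gaussProfileDeriv p σ u) σ := by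
  have hpower : HasDerivAt (fun σ : ℝ => (2 * Real.pi * σ) ^ p)
      (2 * Real.pi * p * (2 * Real.pi * σ) ^ (p - 1)) σ := by
    simpa using ((hasDerivAt_id σ).const_mul (2 * Real.pi)).rpow_const (p := p)
      (Or.inl (by simp only [id]; positivity))
  have hexponent : HasDerivAt (fun σ : ℝ => -u / (2 * σ)) (u / (2 * σ ^ 2)) σ := by
    refine ((hasDerivAt_const σ (-u)).div ((hasDerivAt_id σ).const_mul 2)
      (by simp only [id]; positivity)).congr_deriv ?_
    simp only [id]
    field_simp
    ring
  refine (hpower.mul hexponent.exp).congr_deriv ?_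
  rw [Real.rpow_sub_one (by positivity), gaussProfileDeriv, gaussProfile]
  field_simp

lemma hasDerivAt_gaussProfileDeriv (p σ u : ℝ) :
    HasDerivAt (gaussProfileDeriv p σ)
      (gaussProfile p σ u * (-1 / (2 * σ) * (p / σ + u / (2 * σ ^ 2)) + 1 / (2 * σ ^ 2))) u := by
  have hfactor : HasDerivAt (fun u : ℝ => p / σ + u / (2 * σ ^ 2)) (1 / (2 * σ ^ 2)) u :=
    ((hasDerivAt_id u).div_const (2 * σ ^ 2)).const_add (p / σ)
  exact ((hasDerivAt_gaussProfile p σ u).mul hfactor).congr_deriv (by ring)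

lemma gaussProfile_le_exp (hp : p ≤ 0) (hσ : σ ∈ Icc 1 2) (hu : 0 ≤ u) :
    gaussProfile p σ u ≤ Real.exp (-u / 4) := by
  obtain ⟨h1, h2⟩ := hσ
  have hpower : (2 * Real.pi * σ) ^ p ≤ 1 :=
    Real.rpow_le_one_of_one_le_of_nonpos (by nlinarith [Real.pi_gt_three]) hp
  have hexponent : -u / (2 * σ) ≤ -u / 4 := by
    rw [div_le_div_iff₀ (by linarith) (by norm_num)]
    nlinarith
  calc gaussProfile p σ u ≤ 1 * Real.exp (-u / 4) := by unfold gaussProfile; gcongr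
    _ = Real.exp (-u / 4) := one_mul _

-- Half of the Gaussian decay absorbs the polynomial factors produced by differentiation.
lemma abs_gaussProfile_mul_le {q : ℝ} (hp : p ≤ 0) (hσ : σ ∈ Icc 1 2) (hu : 0 ≤ u)
    (hq : |q| ≤ 1 - p + u) : |gaussProfile p σ u * q| ≤ (9 - p) * Real.exp (-u / 8) := by
  have hpoly : 1 - p + u ≤ (9 - p) * Real.exp (u / 8) := by
    nlinarith [Real.add_one_le_exp (u / 8)]
  rw [abs_mul, abs_of_nonneg (gaussProfile_nonneg (by linarith [hσ.1]))]
  calc gaussProfile p σ u * |q| ≤ Real.exp (-u / 4) * ((9 - p) * Real.exp (u / 8)) := by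
        gcongr
        · exact gaussProfile_le_exp hp hσ hu
        · exact hq.trans hpoly
    _ = (9 - p) * Real.exp (-u / 4 + u / 8) := by rw [Real.exp_add]; ring
    _ = (9 - p) * Real.exp (-u / 8) := by ring_nf

lemma abs_div_add_div_sq_le (hp : p ≤ 0) (hσ : 1 ≤ σ) (hu : 0 ≤ u) :
    |p / σ + u / (2 * σ ^ 2)| ≤ -p + u := by
  have hpσ : |p / σ| ≤ -p := by
    rw [abs_div, abs_of_nonpos hp]
    exact div_le_self (neg_nonneg.2 hp) (hσ.trans (le_abs_self σ))
  have huσ : |u / (2 * σ ^ 2)| ≤ u := by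
    rw [abs_of_nonneg (by positivity)]
    exact div_le_self hu (by nlinarith)
  exact (abs_add_le _ _).trans (add_le_add hpσ huσ)

lemma abs_neg_one_div_two_mul_le_one (hσ : 1 ≤ σ) : |-1 / (2 * σ)| ≤ 1 := by
  rw [abs_div, abs_neg, abs_one, abs_of_pos (by linarith)]
  exact div_le_self zero_le_one (by linarith)

lemma abs_deriv_gaussProfile_le (hp : p ≤ 0) (hσ : σ ∈ Icc 1 2) (hu : 0 ≤ u) :
    |gaussProfile p σ u * (-1 / (2 * σ))| ≤ (9 - p) * Real.exp (-u / 8) :=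
  abs_gaussProfile_mul_le hp hσ hu
    ((abs_neg_one_div_two_mul_le_one hσ.1).trans (by linarith))

lemma abs_gaussProfileDeriv_le (hp : p ≤ 0) (hσ : σ ∈ Icc 1 2) (hu : 0 ≤ u) :
    |gaussProfileDeriv p σ u| ≤ (9 - p) * Real.exp (-u / 8) :=
  abs_gaussProfile_mul_le hp hσ hu ((abs_div_add_div_sq_le hp hσ.1 hu).trans (by linarith))

lemma abs_deriv_gaussProfileDeriv_le (hp : p ≤ 0) (hσ : σ ∈ Icc 1 2) (hu : 0 ≤ u) :
    |gaussProfile p σ u * (-1 / (2 * σ) * (p / σ + u / (2 * σ ^ 2)) + 1 / (2 * σ ^ 2))| ≤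
      (9 - p) * Real.exp (-u / 8) := by
  have hsq : |1 / (2 * σ ^ 2)| ≤ 1 := by
    rw [abs_of_nonneg (by positivity)]
    exact div_le_self zero_le_one (by nlinarith [hσ.1])
  refine abs_gaussProfile_mul_le hp hσ hu ?_
  calc |-1 / (2 * σ) * (p / σ + u / (2 * σ ^ 2)) + 1 / (2 * σ ^ 2)|
      ≤ |-1 / (2 * σ)| * |p / σ + u / (2 * σ ^ 2)| + |1 / (2 * σ ^ 2)| := by
        rw [← abs_mul]; exact abs_add_le _ _
    _ ≤ 1 * (-p + u) + 1 := by
        gcongr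
        · exact abs_neg_one_div_two_mul_le_one hσ.1
        · exact abs_div_add_div_sq_le hp hσ.1 hu
    _ = 1 - p + u := by ring

end GaussianProfile

section RadialShift

variable {E : Type*} [SeminormedAddCommGroup E]

lemma half_norm_sq_sub_one_le_norm_add_sq {h : E} (z : E) (hh : ‖h‖ ≤ 1) :
    ‖z‖ ^ 2 / 2 - 1 ≤ ‖z + h‖ ^ 2 := by
  have hz : ‖z‖ ≤ ‖z + h‖ + 1 :=
    calc ‖z‖ = ‖z + h - h‖ := by rw [add_sub_cancel_right]
      _ ≤ ‖z + h‖ + ‖h‖ := norm_sub_le _ _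
      _ ≤ ‖z + h‖ + 1 := by gcongr
  nlinarith [norm_nonneg z, sq_nonneg (‖z + h‖ - 1)]

lemma abs_norm_add_sq_sub_norm_sq_le {h : E} (z : E) (hh : ‖h‖ ≤ 1) :
    |‖z + h‖ ^ 2 - ‖z‖ ^ 2| ≤ ‖h‖ * (2 * ‖z‖ + 1) :=
  calc |‖z + h‖ ^ 2 - ‖z‖ ^ 2| = |‖z + h‖ - ‖z‖| * (‖z + h‖ + ‖z‖) := by
        rw [sq_sub_sq, abs_mul, abs_of_nonneg (by positivity), mul_comm]
    _ ≤ ‖h‖ * (2 * ‖z‖ + 1) := by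
        refine mul_le_mul ?_ (by linarith [norm_add_le z h]) (by positivity) (norm_nonneg h)
        simpa only [add_sub_cancel_left] using abs_norm_sub_norm_le (z + h) z

-- Between `‖z‖²` and `‖z + h‖²` the argument stays above `‖z‖² / 2 - 1`, so the mean value theorem
-- loses only part of the Gaussian decay.
lemma abs_radial_shift_le {L : ℝ} (hL : 0 ≤ L) {φ φ' : ℝ → ℝ}
    (hφ : ∀ u, HasDerivAt φ (φ' u) u) (hφ' : ∀ u, 0 ≤ u → |φ' u| ≤ L * Real.exp (-u / 8))
    {h : E} (z : E) (hh : ‖h‖ ≤ 1) :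
    |φ (‖z + h‖ ^ 2) - φ (‖z‖ ^ 2)| ≤ ‖h‖ * (64 * L * Real.exp (-(1 / 32) * ‖z‖ ^ 2)) := by
  set B := L * (2 * Real.exp (-‖z‖ ^ 2 / 16)) with hB
  have hderiv : ∀ u ∈ Ici (max 0 (‖z‖ ^ 2 / 2 - 1)), ‖φ' u‖ ≤ B := by
    intro u hu
    obtain ⟨hu0, hzu⟩ := max_le_iff.1 (mem_Ici.1 hu)
    have hexp_two : Real.exp (1 / 8) ≤ 2 := by
      rw [← Real.le_log_iff_exp_le two_pos]
      linarith [Real.log_two_gt_d9]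
    have hexp : Real.exp (-u / 8) ≤ 2 * Real.exp (-‖z‖ ^ 2 / 16) :=
      calc Real.exp (-u / 8) ≤ Real.exp (1 / 8 + -‖z‖ ^ 2 / 16) := by gcongr; linarith
        _ ≤ 2 * Real.exp (-‖z‖ ^ 2 / 16) := by rw [Real.exp_add]; gcongr
    exact (hφ' u hu0).trans (by rw [hB]; gcongr)
  have hz_mem : ‖z‖ ^ 2 ∈ Ici (max 0 (‖z‖ ^ 2 / 2 - 1)) :=
    mem_Ici.2 (max_le (sq_nonneg _) (by linarith [sq_nonneg ‖z‖]))
  have hzh_mem : ‖z + h‖ ^ 2 ∈ Ici (max 0 (‖z‖ ^ 2 / 2 - 1)) :=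
    mem_Ici.2 (max_le (sq_nonneg _) (half_norm_sq_sub_one_le_norm_add_sq z hh))
  have hmvt : |φ (‖z + h‖ ^ 2) - φ (‖z‖ ^ 2)| ≤ B * |‖z + h‖ ^ 2 - ‖z‖ ^ 2| :=
    Convex.norm_image_sub_le_of_norm_hasDerivWithin_le
      (fun u _ => (hφ u).hasDerivWithinAt) hderiv (convex_Ici _) hz_mem hzh_mem
  have hlinear : 2 * ‖z‖ + 1 ≤ 32 * Real.exp (‖z‖ ^ 2 / 32) := by
    nlinarith [Real.add_one_le_exp (‖z‖ ^ 2 / 32), sq_nonneg (‖z‖ - 1)]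
  calc |φ (‖z + h‖ ^ 2) - φ (‖z‖ ^ 2)| ≤ B * (‖h‖ * (32 * Real.exp (‖z‖ ^ 2 / 32))) :=
        hmvt.trans (by
          gcongr
          exact (abs_norm_add_sq_sub_norm_sq_le z hh).trans (by gcongr))
    _ = ‖h‖ * (64 * L * Real.exp (-‖z‖ ^ 2 / 16 + ‖z‖ ^ 2 / 32)) := by
        rw [hB, Real.exp_add]; ring
    _ = ‖h‖ * (64 * L * Real.exp (-(1 / 32) * ‖z‖ ^ 2)) := by ring_nf

end RadialShift

section GaussianKernels

/-- A common integrable envelope for the Gaussian densities of variance `σ ∈ [1, 2]` and for their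
increments in space and in the variance. The factor `9 - p` with `p = -d / 2` comes from
`abs_gaussProfile_mul_le`. -/
noncomputable def gaussEnvelope {d : ℕ} (z : Euc d) : ℝ :=
  64 * (9 - -(d : ℝ) / 2) * Real.exp (-(1 / 32) * ‖z‖ ^ 2)

/-- The difference between the Gaussian density of variance `σ` and the standard one. -/
noncomputable abbrev gaussIncrement (d : ℕ) (σ : ℝ) : Euc d → ℝ :=
  gaussDensity d σ - gaussDensity d 1

variable {d : ℕ} {σ : ℝ}

lemma neg_natCast_div_two_nonpos (d : ℕ) : -(d : ℝ) / 2 ≤ 0 := by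
  linarith [d.cast_nonneg (α := ℝ)]

lemma gaussEnvelope_nonneg (z : Euc d) : 0 ≤ gaussEnvelope z := by
  have := neg_natCast_div_two_nonpos d
  exact mul_nonneg (by linarith) (Real.exp_pos _).le

lemma exp_neg_norm_sq_div_eight_le_gaussEnvelope (z : Euc d) :
    (9 - -(d : ℝ) / 2) * Real.exp (-‖z‖ ^ 2 / 8) ≤ gaussEnvelope z := by
  have := neg_natCast_div_two_nonpos d
  unfold gaussEnvelope
  gcongr ?_ * Real.exp ?_ <;> nlinarith [sq_nonneg ‖z‖]

lemma abs_gaussDensity_one_le_gaussEnvelope (z : Euc d) :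
    |gaussDensity d 1 z| ≤ gaussEnvelope z := by
  have hp := neg_natCast_div_two_nonpos d
  rw [gaussDensity_eq_gaussProfile, ← mul_one (gaussProfile _ _ _)]
  refine (abs_gaussProfile_mul_le hp ⟨le_rfl, one_le_two⟩ (sq_nonneg _) ?_).trans
    (exp_neg_norm_sq_div_eight_le_gaussEnvelope z)
  rw [abs_one]
  linarith [sq_nonneg ‖z‖]

lemma abs_gaussDensity_one_shift_le {h : Euc d} (z : Euc d) (hh : ‖h‖ ≤ 1) :
    |gaussDensity d 1 (z + h) - gaussDensity d 1 z| ≤ ‖h‖ * gaussEnvelope z := by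
  have hp := neg_natCast_div_two_nonpos d
  exact abs_radial_shift_le (by linarith) (hasDerivAt_gaussProfile _ 1)
    (fun u hu => abs_deriv_gaussProfile_le hp ⟨le_rfl, one_le_two⟩ hu) z hh

lemma abs_gaussIncrement_le (z : Euc d) (hσ : σ ∈ Icc 1 2) :
    |gaussIncrement d σ z| ≤ (σ - 1) * gaussEnvelope z := by
  have hp := neg_natCast_div_two_nonpos d
  have hmvt : ‖gaussDensity d σ z - gaussDensity d 1 z‖ ≤ gaussEnvelope z * ‖σ - 1‖ :=
    Convex.norm_image_sub_le_of_norm_hasDerivWithin_le (f := fun τ => gaussDensity d τ z)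
      (fun τ hτ =>
        (hasDerivAt_gaussProfile_variance _ _ (zero_lt_one.trans_le hτ.1)).hasDerivWithinAt)
      (fun τ hτ => (abs_gaussProfileDeriv_le hp hτ (sq_nonneg _)).trans
        (exp_neg_norm_sq_div_eight_le_gaussEnvelope z))
      (convex_Icc 1 2) ⟨le_rfl, one_le_two⟩ hσ
  rwa [Real.norm_of_nonneg (sub_nonneg.2 hσ.1), mul_comm] at hmvt

lemma abs_gaussIncrement_shift_le {h : Euc d} (z : Euc d) (hh : ‖h‖ ≤ 1)
    (hσ : σ ∈ Icc 1 2) :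
    |gaussIncrement d σ (z + h) - gaussIncrement d σ z| ≤ (σ - 1) * ‖h‖ * gaussEnvelope z := by
  have hp := neg_natCast_div_two_nonpos d
  have hmvt : ‖gaussDensity d σ (z + h) - gaussDensity d σ z -
      (gaussDensity d 1 (z + h) - gaussDensity d 1 z)‖ ≤ ‖h‖ * gaussEnvelope z * ‖σ - 1‖ :=
    Convex.norm_image_sub_le_of_norm_hasDerivWithin_le
      (f := fun τ => gaussDensity d τ (z + h) - gaussDensity d τ z)
      (fun τ hτ =>
        ((hasDerivAt_gaussProfile_variance _ _ (zero_lt_one.trans_le hτ.1)).sub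
          (hasDerivAt_gaussProfile_variance _ _ (zero_lt_one.trans_le hτ.1))).hasDerivWithinAt)
      (fun τ hτ => abs_radial_shift_le (by linarith) (hasDerivAt_gaussProfileDeriv _ τ)
        (fun u hu => abs_deriv_gaussProfileDeriv_le hp hτ hu) z hh)
      (convex_Icc 1 2) ⟨le_rfl, one_le_two⟩ hσ
  rw [Real.norm_of_nonneg (sub_nonneg.2 hσ.1), sub_sub_sub_comm] at hmvt
  exact hmvt.trans_eq (by ring)

lemma integrable_norm_rpow_mul_exp_neg_mul_sq {E : Type*} [NormedAddCommGroup E]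
    [NormedSpace ℝ E] [FiniteDimensional ℝ E] [MeasurableSpace E] [BorelSpace E] (μ : Measure E)
    [μ.IsAddHaarMeasure] {b s : ℝ} (hb : 0 < b) (hs : 0 ≤ s) :
    Integrable (fun z : E => ‖z‖ ^ s * Real.exp (-b * ‖z‖ ^ 2)) μ := by
  rcases subsingleton_or_nontrivial E with _ | _
  · exact Integrable.of_subsingleton
  refine (integrable_fun_norm_addHaar μ (f := fun r => r ^ s * Real.exp (-b * r ^ 2))).2 ?_
  have hs' : -1 < (Module.finrank ℝ E - 1 : ℕ) + s :=
    neg_one_lt_zero.trans_le (by positivity)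
  refine (integrableOn_rpow_mul_exp_neg_mul_sq hb hs').congr_fun (fun r hr => ?_)
    measurableSet_Ioi
  simp only [smul_eq_mul]
  rw [← mul_assoc, Real.rpow_add hr, Real.rpow_natCast]

lemma gaussDensity_eq_mul_exp (d : ℕ) (σ : ℝ) :
    gaussDensity d σ = fun x : Euc d =>
      (2 * Real.pi * σ) ^ (-(d : ℝ) / 2) * Real.exp (-(1 / (2 * σ)) * ‖x‖ ^ 2) := by
  funext x
  unfold gaussDensity
  ring_nf

lemma integrable_gaussDensity (d : ℕ) (hσ : 0 < σ) : Integrable (gaussDensity d σ) := by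
  have hexp := integrable_norm_rpow_mul_exp_neg_mul_sq (volume : Measure (Euc d))
    (b := 1 / (2 * σ)) (by positivity) le_rfl
  simp only [Real.rpow_zero, one_mul] at hexp
  rw [gaussDensity_eq_mul_exp]
  exact hexp.const_mul _

lemma integral_gaussDensity (d : ℕ) (hσ : 0 < σ) : ∫ z, gaussDensity d σ z = 1 := by
  have hvar : Real.pi / (1 / (2 * σ)) = 2 * Real.pi * σ := by field_simp
  rw [gaussDensity_eq_mul_exp, integral_const_mul,
    GaussianFourier.integral_rexp_neg_mul_sq_norm (by positivity), hvar, finrank_euclideanSpace,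
    Fintype.card_fin, ← Real.rpow_add (by positivity), neg_div, neg_add_cancel, Real.rpow_zero]

lemma gaussDensity_nonneg (hσ : 0 < σ) (z : Euc d) : 0 ≤ gaussDensity d σ z :=
  gaussProfile_nonneg hσ.le

lemma gaussDensity_sq_mul_smul {r : ℝ} (hr : 0 < r) (hσ : 0 < σ) (z : Euc d) :
    r ^ d * gaussDensity d (r ^ 2 * σ) (r • z) = gaussDensity d σ z := by
  have hexponent : -(r * ‖z‖) ^ 2 / (2 * (r ^ 2 * σ)) = -‖z‖ ^ 2 / (2 * σ) := by field_simp
  have hnormalisation : r ^ d * (2 * Real.pi * (r ^ 2 * σ)) ^ (-(d : ℝ) / 2) =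
      (2 * Real.pi * σ) ^ (-(d : ℝ) / 2) := by
    have hcancel : (d : ℝ) + (2 : ℕ) * (-(d : ℝ) / 2) = 0 := by push_cast; ring
    rw [mul_left_comm, Real.mul_rpow (by positivity) (by positivity), ← Real.rpow_natCast r 2,
      ← Real.rpow_mul hr.le, ← mul_assoc, ← Real.rpow_natCast r d, ← Real.rpow_add hr, hcancel,
      Real.rpow_zero, one_mul]
  rw [gaussDensity, norm_smul, Real.norm_of_nonneg hr.le, hexponent, ← mul_assoc, hnormalisation,
    gaussDensity]

end GaussianKernels

/-- `f` is bounded and measurable, and `F` bounds its `α`-Hölder seminorm. -/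
structure BoundedHolder {d : ℕ} (f : Euc d → ℝ) (α F : ℝ) : Prop where
  measurable : Measurable f
  bounded : ∃ C, ∀ x, |f x| ≤ C
  holder : ∀ x y, |f x - f y| ≤ F * ‖x - y‖ ^ α
  const_nonneg : 0 ≤ F

/-- The `α`-th moment of `gaussEnvelope`, raised by `1` so that the same constant also dominates
the contraction bound `|(p_σ ⋆ f)(x) - (p_σ ⋆ f)(y)| ≤ F |x - y|^α`. -/
noncomputable def smoothingConst (d : ℕ) (α : ℝ) : ℝ :=
  1 + ∫ z : Euc d, ‖z‖ ^ α * gaussEnvelope z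

lemma one_le_smoothingConst (d : ℕ) (α : ℝ) : 1 ≤ smoothingConst d α :=
  le_add_of_nonneg_right
    (integral_nonneg fun z => mul_nonneg (by positivity) (gaussEnvelope_nonneg z))

section Convolution

variable {d : ℕ} {α F : ℝ} {f : Euc d → ℝ} {K K₁ K₂ : Euc d → ℝ}

lemma BoundedHolder.integrable_mul_comp_sub (hf : BoundedHolder f α F) (hK : Integrable K)
    (x : Euc d) : Integrable (fun z => K z * f (x - z)) := by
  obtain ⟨C, hC⟩ := hf.bounded
  exact hK.mul_bdd (hf.measurable.comp (measurable_const.sub measurable_id)).aestronglyMeasurable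
    (Eventually.of_forall fun z => hC (x - z))

lemma BoundedHolder.comp_smul (hf : BoundedHolder f α F) {r : ℝ} (hr : 0 ≤ r) :
    BoundedHolder (fun y => f (r • y)) α (r ^ α * F) where
  measurable := hf.measurable.comp (measurable_const_smul r)
  bounded := hf.bounded.imp fun _ hC x => hC (r • x)
  holder x y := by
    refine (hf.holder _ _).trans_eq ?_
    rw [← smul_sub, norm_smul, Real.norm_of_nonneg hr, Real.mul_rpow hr (norm_nonneg _)]
    ring
  const_nonneg := mul_nonneg (by positivity) hf.const_nonneg

lemma BoundedHolder.sub_convolution (hf : BoundedHolder f α F) (hK₁ : Integrable K₁)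
    (hK₂ : Integrable K₂) (x : Euc d) : ((K₁ - K₂) ⋆ f) x = (K₁ ⋆ f) x - (K₂ ⋆ f) x := by
  simp only [convolution_lsmul, smul_eq_mul, Pi.sub_apply, sub_mul]
  exact integral_sub (hf.integrable_mul_comp_sub hK₁ x) (hf.integrable_mul_comp_sub hK₂ x)

lemma BoundedHolder.convolution_add_sub (hf : BoundedHolder f α F) (hK : Integrable K)
    (x h : Euc d) :
    (K ⋆ f) (x + h) - (K ⋆ f) x = (((fun z => K (z + h)) - K) ⋆ f) x := by
  have htranslate : ((fun z => K (z + h)) ⋆ f) x = (K ⋆ f) (x + h) := by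
    simp only [convolution_lsmul]
    rw [← integral_add_right_eq_self (fun z => K z • f (x + h - z)) h]
    simp only [add_sub_add_right_eq_sub]
  rw [hf.sub_convolution (hK.comp_add_right h) hK, htranslate]

lemma BoundedHolder.abs_convolution_sub_integral_mul_le (hf : BoundedHolder f α F) (hα : 0 ≤ α)
    (hK : Integrable K) {C : ℝ} (hC : 0 ≤ C) (hKC : ∀ z, |K z| ≤ C * gaussEnvelope z)
    (x : Euc d) : |(K ⋆ f) x - (∫ z, K z) * f x| ≤ C * smoothingConst d α * F := by
  have hF := hf.const_nonneg
  have hmoment : Integrable (fun z : Euc d => ‖z‖ ^ α * gaussEnvelope z) := by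
    have := (integrable_norm_rpow_mul_exp_neg_mul_sq (volume : Measure (Euc d))
      (b := 1 / 32) (by norm_num) hα).const_mul (64 * (9 - -(d : ℝ) / 2))
    exact this.congr (Eventually.of_forall fun z => by unfold gaussEnvelope; ring)
  have hpointwise : ∀ z, ‖K z * (f (x - z) - f x)‖ ≤ C * F * (‖z‖ ^ α * gaussEnvelope z) := by
    intro z
    have hfz : |f (x - z) - f x| ≤ F * ‖z‖ ^ α := by
      simpa only [sub_sub_cancel_left, norm_neg] using hf.holder (x - z) x
    calc ‖K z * (f (x - z) - f x)‖ = |K z| * |f (x - z) - f x| := norm_mul _ _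
      _ ≤ C * gaussEnvelope z * (F * ‖z‖ ^ α) :=
          mul_le_mul (hKC z) hfz (abs_nonneg _) (mul_nonneg hC (gaussEnvelope_nonneg z))
      _ = C * F * (‖z‖ ^ α * gaussEnvelope z) := by ring
  calc |(K ⋆ f) x - (∫ z, K z) * f x| = ‖∫ z, K z * (f (x - z) - f x)‖ := by
        simp only [convolution_lsmul, smul_eq_mul, mul_sub]
        rw [integral_sub (hf.integrable_mul_comp_sub hK x) (hK.mul_const _), integral_mul_const,
          Real.norm_eq_abs]
    _ ≤ ∫ z, C * F * (‖z‖ ^ α * gaussEnvelope z) :=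
        norm_integral_le_of_norm_le (hmoment.const_mul _) (Eventually.of_forall hpointwise)
    _ = C * F * ∫ z : Euc d, ‖z‖ ^ α * gaussEnvelope z := integral_const_mul _ _
    _ ≤ C * F * smoothingConst d α := by
        gcongr
        exact le_add_of_nonneg_left zero_le_one
    _ = C * smoothingConst d α * F := by ring

lemma BoundedHolder.abs_convolution_add_sub_le (hf : BoundedHolder f α F) (hα : 0 ≤ α)
    (hK : Integrable K) {C : ℝ} (hC : 0 ≤ C) {h : Euc d}
    (hKC : ∀ z, |K (z + h) - K z| ≤ C * gaussEnvelope z) (x : Euc d) :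
    |(K ⋆ f) (x + h) - (K ⋆ f) x| ≤ C * smoothingConst d α * F := by
  have hshift := hK.comp_add_right h
  have hmean : ∫ z, ((fun z => K (z + h)) - K) z = 0 := by
    simp only [Pi.sub_apply]
    rw [integral_sub hshift hK, integral_add_right_eq_self K h, sub_self]
  have hbound := hf.abs_convolution_sub_integral_mul_le hα (hshift.sub hK) hC hKC x
  rwa [hmean, zero_mul, sub_zero, ← hf.convolution_add_sub hK] at hbound

end Convolution

section UnitVariance

variable {d : ℕ} {α β F σ : ℝ} {f : Euc d → ℝ}

lemma BoundedHolder.abs_convolution_gaussDensity_sub_le (hf : BoundedHolder f α F) (hσ : 0 < σ)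
    (x y : Euc d) :
    |(gaussDensity d σ ⋆ f) x - (gaussDensity d σ ⋆ f) y| ≤ F * ‖x - y‖ ^ α := by
  have hp := integrable_gaussDensity d hσ
  have hpointwise : ∀ z, ‖gaussDensity d σ z * f (x - z) - gaussDensity d σ z * f (y - z)‖ ≤
      gaussDensity d σ z * (F * ‖x - y‖ ^ α) := by
    intro z
    have hfz := hf.holder (x - z) (y - z)
    rw [sub_sub_sub_cancel_right] at hfz
    rw [← mul_sub, norm_mul, Real.norm_of_nonneg (gaussDensity_nonneg hσ z)]
    exact mul_le_mul_of_nonneg_left hfz (gaussDensity_nonneg hσ z)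
  simp only [convolution_lsmul, smul_eq_mul]
  rw [← integral_sub (hf.integrable_mul_comp_sub hp x) (hf.integrable_mul_comp_sub hp y)]
  refine (norm_integral_le_of_norm_le (hp.mul_const _)
    (Eventually.of_forall hpointwise)).trans_eq ?_
  rw [integral_mul_const, integral_gaussDensity d hσ, one_mul]

lemma BoundedHolder.abs_convolution_gaussDensity_one_sub_self_le (hf : BoundedHolder f α F)
    (hα : 0 ≤ α) (x : Euc d) :
    |(gaussDensity d 1 ⋆ f) x - f x| ≤ smoothingConst d α * F := by
  simpa only [integral_gaussDensity d one_pos, one_mul] using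
    hf.abs_convolution_sub_integral_mul_le hα (integrable_gaussDensity d one_pos) zero_le_one
      (fun z => by simpa only [one_mul] using abs_gaussDensity_one_le_gaussEnvelope z) x

lemma BoundedHolder.abs_convolution_gaussDensity_one_sub_le (hf : BoundedHolder f α F)
    (hα : 0 ≤ α) (hαβ : α ≤ β) (hβ : β ≤ 1) (x y : Euc d) :
    |(gaussDensity d 1 ⋆ f) x - (gaussDensity d 1 ⋆ f) y| ≤
      smoothingConst d α * F * ‖x - y‖ ^ β := by
  have hF := hf.const_nonneg
  have hW := one_le_smoothingConst d α
  rcases le_total ‖x - y‖ 1 with h | h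
  · have hlipschitz := hf.abs_convolution_add_sub_le hα (integrable_gaussDensity d one_pos)
      (norm_nonneg (x - y)) (fun z => abs_gaussDensity_one_shift_le z h) y
    rw [add_sub_cancel] at hlipschitz
    calc _ ≤ ‖x - y‖ * smoothingConst d α * F := hlipschitz
      _ = smoothingConst d α * F * ‖x - y‖ := by ring
      _ ≤ smoothingConst d α * F * ‖x - y‖ ^ β := by
          gcongr
          exact Real.self_le_rpow_of_le_one (norm_nonneg _) h hβ
  · calc _ ≤ F * ‖x - y‖ ^ α := hf.abs_convolution_gaussDensity_sub_le one_pos x y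
      _ ≤ smoothingConst d α * F * ‖x - y‖ ^ β := by
          gcongr
          exact le_mul_of_one_le_left hF hW

lemma BoundedHolder.abs_gaussIncrement_convolution_le_of_le_two (hf : BoundedHolder f α F)
    (hα : 0 ≤ α) (hσ : σ ∈ Icc 1 2) (x : Euc d) :
    |(gaussIncrement d σ ⋆ f) x| ≤ (σ - 1) * smoothingConst d α * F := by
  have hσ0 : 0 < σ := zero_lt_one.trans_le hσ.1
  have hpσ := integrable_gaussDensity d hσ0
  have hp1 := integrable_gaussDensity d one_pos
  have hmean : ∫ z, gaussIncrement d σ z = 0 := by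
    simp only [Pi.sub_apply]
    rw [integral_sub hpσ hp1, integral_gaussDensity d hσ0, integral_gaussDensity d one_pos,
      sub_self]
  have hbound := hf.abs_convolution_sub_integral_mul_le hα (hpσ.sub hp1) (sub_nonneg.2 hσ.1)
    (fun z => abs_gaussIncrement_le z hσ) x
  rwa [hmean, zero_mul, sub_zero] at hbound

lemma BoundedHolder.abs_gaussIncrement_convolution_sub_le_of_le_two (hf : BoundedHolder f α F)
    (hα : 0 ≤ α) (hβ0 : 0 ≤ β) (hβ1 : β ≤ 1) (hσ : σ ∈ Icc 1 2) (x y : Euc d) :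
    |(gaussIncrement d σ ⋆ f) x - (gaussIncrement d σ ⋆ f) y| ≤
      2 * ((σ - 1) * smoothingConst d α * F) * ‖x - y‖ ^ β := by
  have hbound_nonneg : 0 ≤ (σ - 1) * smoothingConst d α * F :=
    (abs_nonneg _).trans (hf.abs_gaussIncrement_convolution_le_of_le_two hα hσ x)
  have hp := (integrable_gaussDensity d (zero_lt_one.trans_le hσ.1)).sub
    (integrable_gaussDensity d one_pos)
  set g := gaussIncrement d σ ⋆ f
  have hfar : |g x - g y| ≤ 2 * ((σ - 1) * smoothingConst d α * F) * 1 ^ (1 : ℝ) := by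
    rw [Real.one_rpow, mul_one, two_mul]
    exact (abs_sub _ _).trans
      (add_le_add (hf.abs_gaussIncrement_convolution_le_of_le_two hα hσ x)
        (hf.abs_gaussIncrement_convolution_le_of_le_two hα hσ y))
  have hnear : ‖x - y‖ ≤ 1 →
      |g x - g y| ≤ 2 * ((σ - 1) * smoothingConst d α * F) * ‖x - y‖ ^ (1 : ℝ) := by
    intro h
    have hlipschitz := hf.abs_convolution_add_sub_le hα hp
      (mul_nonneg (sub_nonneg.2 hσ.1) (norm_nonneg (x - y)))
      (fun z => abs_gaussIncrement_shift_le z h hσ) y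
    rw [add_sub_cancel] at hlipschitz
    rw [Real.rpow_one]
    linarith [mul_nonneg hbound_nonneg (norm_nonneg (x - y))]
  have hinterp := le_mul_rpow_of_le_of_le (mul_nonneg zero_le_two hbound_nonneg)
    (norm_nonneg (x - y)) zero_le_one hβ0 hβ1 hfar hnear
  rwa [Real.one_rpow, one_mul] at hinterp

end UnitVariance

section Scaling

variable {d : ℕ} {α β F σ r : ℝ} {f : Euc d → ℝ}

lemma convolution_gaussDensity_sq_mul (hr : 0 < r) (hσ : 0 < σ) (f : Euc d → ℝ) (x : Euc d) :
    (gaussDensity d (r ^ 2 * σ) ⋆ f) x =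
      (gaussDensity d σ ⋆ fun y => f (r • y)) (r⁻¹ • x) := by
  have hsubst := Measure.integral_comp_smul_of_nonneg volume
    (fun z : Euc d => gaussDensity d (r ^ 2 * σ) z * f (x - z)) r (hR := hr.le)
  rw [finrank_euclideanSpace, Fintype.card_fin, smul_eq_mul, inv_mul_eq_div,
    eq_div_iff (pow_pos hr d).ne'] at hsubst
  simp only [convolution_lsmul, smul_eq_mul]
  rw [← hsubst, mul_comm, ← integral_const_mul]
  simp only [← mul_assoc, gaussDensity_sq_mul_smul hr hσ, smul_sub, smul_inv_smul₀ hr.ne']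

lemma rpow_mul_norm_inv_smul_sub_rpow (hr : 0 < r) (α β : ℝ) (x y : Euc d) :
    r ^ α * ‖r⁻¹ • x - r⁻¹ • y‖ ^ β = r ^ (α - β) * ‖x - y‖ ^ β := by
  rw [← smul_sub, norm_smul, norm_inv, Real.norm_of_nonneg hr.le,
    Real.mul_rpow (inv_nonneg.2 hr.le) (norm_nonneg _), Real.inv_rpow hr.le, Real.rpow_sub hr]
  ring

lemma BoundedHolder.abs_convolution_gaussDensity_sq_sub_self_le (hf : BoundedHolder f α F)
    (hα : 0 ≤ α) (hr : 0 < r) (x : Euc d) :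
    |(gaussDensity d (r ^ 2) ⋆ f) x - f x| ≤ smoothingConst d α * F * r ^ α := by
  have hscaled := (hf.comp_smul hr.le).abs_convolution_gaussDensity_one_sub_self_le hα (r⁻¹ • x)
  rw [← convolution_gaussDensity_sq_mul hr one_pos, mul_one, smul_inv_smul₀ hr.ne'] at hscaled
  exact hscaled.trans_eq (by ring)

lemma BoundedHolder.abs_convolution_gaussDensity_sq_sub_le (hf : BoundedHolder f α F)
    (hα : 0 ≤ α) (hαβ : α ≤ β) (hβ : β ≤ 1) (hr : 0 < r) (x y : Euc d) :
    |(gaussDensity d (r ^ 2) ⋆ f) x - (gaussDensity d (r ^ 2) ⋆ f) y| ≤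
      smoothingConst d α * F * (r ^ (α - β) * ‖x - y‖ ^ β) := by
  have hscaled := (hf.comp_smul hr.le).abs_convolution_gaussDensity_one_sub_le hα hαβ hβ
    (r⁻¹ • x) (r⁻¹ • y)
  simp only [← convolution_gaussDensity_sq_mul hr one_pos, mul_one] at hscaled
  rw [← rpow_mul_norm_inv_smul_sub_rpow hr]
  exact hscaled.trans_eq (by ring)

end Scaling

section Increment

variable {d : ℕ} {α β δ F σ : ℝ} {f : Euc d → ℝ}

lemma BoundedHolder.gaussDensity_sub_convolution (hf : BoundedHolder f α F) {a b : ℝ} (ha : 0 < a)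
    (hb : 0 < b) (x : Euc d) :
    ((gaussDensity d b - gaussDensity d a) ⋆ f) x =
      (gaussDensity d b ⋆ f) x - (gaussDensity d a ⋆ f) x :=
  hf.sub_convolution (integrable_gaussDensity d hb) (integrable_gaussDensity d ha) x

lemma BoundedHolder.abs_gaussIncrement_convolution_le_sqrt_rpow (hf : BoundedHolder f α F)
    (hα : 0 ≤ α) (hσ : 1 ≤ σ) (x : Euc d) :
    |(gaussIncrement d σ ⋆ f) x| ≤ 2 * smoothingConst d α * F * √σ ^ α := by
  have hσ0 : 0 < σ := zero_lt_one.trans_le hσ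
  have hF := hf.const_nonneg
  have hW := zero_le_one.trans (one_le_smoothingConst d α)
  have hσ_self := hf.abs_convolution_gaussDensity_sq_sub_self_le hα (Real.sqrt_pos.2 hσ0) x
  rw [Real.sq_sqrt hσ0.le] at hσ_self
  have h1_self : |(gaussDensity d 1 ⋆ f) x - f x| ≤ smoothingConst d α * F * √σ ^ α :=
    (hf.abs_convolution_gaussDensity_one_sub_self_le hα x).trans
      (le_mul_of_one_le_right (by positivity) (Real.one_le_rpow (Real.one_le_sqrt.2 hσ) hα))
  rw [hf.gaussDensity_sub_convolution one_pos hσ0, ← sub_sub_sub_cancel_right _ _ (f x)]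
  exact (abs_sub _ _).trans (by linarith)

lemma BoundedHolder.abs_gaussIncrement_convolution_sub_le_sqrt_rpow (hf : BoundedHolder f α F)
    (hβ : 0 ≤ β) (hβα : β ≤ α) (hσ : 1 ≤ σ) (x y : Euc d) :
    |(gaussIncrement d σ ⋆ f) x - (gaussIncrement d σ ⋆ f) y| ≤
      4 * smoothingConst d α * F * (√σ ^ (α - β) * ‖x - y‖ ^ β) := by
  have hσ0 : 0 < σ := zero_lt_one.trans_le hσ
  have hF := hf.const_nonneg
  have hW := one_le_smoothingConst d α
  refine le_mul_rpow_of_le_of_le (by positivity) (norm_nonneg _) (Real.sqrt_nonneg σ) hβ hβα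
    ?_ fun _ => ?_
  · have hx := hf.abs_gaussIncrement_convolution_le_sqrt_rpow (hβ.trans hβα) hσ x
    have hy := hf.abs_gaussIncrement_convolution_le_sqrt_rpow (hβ.trans hβα) hσ y
    exact (abs_sub _ _).trans (by linarith)
  · have hcontract_σ := hf.abs_convolution_gaussDensity_sub_le hσ0 x y
    have hcontract_1 := hf.abs_convolution_gaussDensity_sub_le one_pos x y
    rw [hf.gaussDensity_sub_convolution one_pos hσ0, hf.gaussDensity_sub_convolution one_pos hσ0,
      sub_sub_sub_comm]
    calc _ ≤ 2 * F * ‖x - y‖ ^ α := (abs_sub _ _).trans (by linarith)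
      _ ≤ 4 * smoothingConst d α * F * ‖x - y‖ ^ α := by gcongr; linarith

lemma BoundedHolder.abs_gaussIncrement_convolution_sub_le_of_exponent_le (hf : BoundedHolder f α F)
    (hα : 0 ≤ α) (hαβ : α ≤ β) (hβ : β ≤ 1) (hσ : 1 ≤ σ) (x y : Euc d) :
    |(gaussIncrement d σ ⋆ f) x - (gaussIncrement d σ ⋆ f) y| ≤
      2 * smoothingConst d α * F * ‖x - y‖ ^ β := by
  have hσ0 : 0 < σ := zero_lt_one.trans_le hσ
  have hF := hf.const_nonneg
  have hW := one_le_smoothingConst d α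
  have hsmooth_σ :=
    hf.abs_convolution_gaussDensity_sq_sub_le hα hαβ hβ (Real.sqrt_pos.2 hσ0) x y
  have hsmooth_1 := hf.abs_convolution_gaussDensity_one_sub_le hα hαβ hβ x y
  have hdecay : √σ ^ (α - β) * ‖x - y‖ ^ β ≤ ‖x - y‖ ^ β :=
    mul_le_of_le_one_left (by positivity)
      (Real.rpow_le_one_of_one_le_of_nonpos (Real.one_le_sqrt.2 hσ) (sub_nonpos.2 hαβ))
  rw [Real.sq_sqrt hσ0.le] at hsmooth_σ
  rw [hf.gaussDensity_sub_convolution one_pos hσ0, hf.gaussDensity_sub_convolution one_pos hσ0,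
    sub_sub_sub_comm]
  calc _ ≤ smoothingConst d α * F * (√σ ^ (α - β) * ‖x - y‖ ^ β) +
        smoothingConst d α * F * ‖x - y‖ ^ β :=
        (abs_sub _ _).trans (add_le_add hsmooth_σ hsmooth_1)
    _ ≤ smoothingConst d α * F * ‖x - y‖ ^ β + smoothingConst d α * F * ‖x - y‖ ^ β := by gcongr
    _ = 2 * smoothingConst d α * F * ‖x - y‖ ^ β := by ring

lemma sub_one_le_sub_one_rpow (hδ : δ ≤ 1) (hσ : σ ∈ Icc 1 2) : σ - 1 ≤ (σ - 1) ^ δ :=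
  Real.self_le_rpow_of_le_one (sub_nonneg.2 hσ.1) (by linarith [hσ.2]) hδ

lemma BoundedHolder.abs_gaussIncrement_convolution_le (hf : BoundedHolder f α F) (hα : 0 ≤ α)
    (hβ : 0 ≤ β) (hδ0 : 0 ≤ δ) (hδ1 : δ ≤ 1) (hδ_low : (α - β) / 2 ≤ δ) (hσ : 1 ≤ σ) (x : Euc d) :
    |(gaussIncrement d σ ⋆ f) x| ≤
      8 * smoothingConst d α * F * (σ ^ (β / 2) * (σ - 1) ^ δ) := by
  have hF := hf.const_nonneg
  have hW := one_le_smoothingConst d α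
  have : 0 ≤ σ - 1 := sub_nonneg.2 hσ
  rcases le_total σ 2 with h2 | h2
  · calc _ ≤ (σ - 1) * smoothingConst d α * F :=
          hf.abs_gaussIncrement_convolution_le_of_le_two hα ⟨hσ, h2⟩ x
      _ = 1 * smoothingConst d α * F * (1 * (σ - 1)) := by ring
      _ ≤ 8 * smoothingConst d α * F * (σ ^ (β / 2) * (σ - 1) ^ δ) := by
          gcongr
          · norm_num
          · exact Real.one_le_rpow hσ (by positivity)
          · exact sub_one_le_sub_one_rpow hδ1 ⟨hσ, h2⟩
  · have hsplit : σ ^ (α / 2) = σ ^ (β / 2) * σ ^ ((α - β) / 2) := by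
      rw [← Real.rpow_add (by linarith)]
      ring_nf
    calc _ ≤ 2 * smoothingConst d α * F * √σ ^ α :=
          hf.abs_gaussIncrement_convolution_le_sqrt_rpow hα hσ x
      _ = 2 * smoothingConst d α * F * (σ ^ (β / 2) * σ ^ ((α - β) / 2)) := by
          rw [← hsplit, Real.rpow_div_two_eq_sqrt _ (by linarith)]
      _ ≤ 2 * smoothingConst d α * F * (σ ^ (β / 2) * (2 * (σ - 1) ^ δ)) := by
          gcongr
          exact rpow_le_two_mul_sub_one_rpow h2 hδ_low hδ0 hδ1
      _ = 4 * smoothingConst d α * F * (σ ^ (β / 2) * (σ - 1) ^ δ) := by ring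
      _ ≤ 8 * smoothingConst d α * F * (σ ^ (β / 2) * (σ - 1) ^ δ) := by gcongr; norm_num

lemma BoundedHolder.abs_gaussIncrement_convolution_sub_le (hf : BoundedHolder f α F) (hα : 0 ≤ α)
    (hβ0 : 0 ≤ β) (hβ1 : β ≤ 1) (hδ0 : 0 ≤ δ) (hδ1 : δ ≤ 1) (hδ_low : (α - β) / 2 ≤ δ) (hσ : 1 ≤ σ)
    (x y : Euc d) :
    |(gaussIncrement d σ ⋆ f) x - (gaussIncrement d σ ⋆ f) y| ≤
      8 * smoothingConst d α * F * ((σ - 1) ^ δ * ‖x - y‖ ^ β) := by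
  have hF := hf.const_nonneg
  have hW := one_le_smoothingConst d α
  have : 0 ≤ σ - 1 := sub_nonneg.2 hσ
  rcases le_total σ 2 with h2 | h2
  · calc _ ≤ 2 * ((σ - 1) * smoothingConst d α * F) * ‖x - y‖ ^ β :=
          hf.abs_gaussIncrement_convolution_sub_le_of_le_two hα hβ0 hβ1 ⟨hσ, h2⟩ x y
      _ = 2 * smoothingConst d α * F * ((σ - 1) * ‖x - y‖ ^ β) := by ring
      _ ≤ 8 * smoothingConst d α * F * ((σ - 1) ^ δ * ‖x - y‖ ^ β) := by
          gcongr
          · norm_num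
          · exact sub_one_le_sub_one_rpow hδ1 ⟨hσ, h2⟩
  · rcases le_total β α with hβα | hαβ
    · calc _ ≤ 4 * smoothingConst d α * F * (√σ ^ (α - β) * ‖x - y‖ ^ β) :=
            hf.abs_gaussIncrement_convolution_sub_le_sqrt_rpow hβ0 hβα hσ x y
        _ ≤ 4 * smoothingConst d α * F * (2 * (σ - 1) ^ δ * ‖x - y‖ ^ β) := by
            rw [← Real.rpow_div_two_eq_sqrt _ (by linarith)]
            gcongr
            exact rpow_le_two_mul_sub_one_rpow h2 hδ_low hδ0 hδ1
        _ = 8 * smoothingConst d α * F * ((σ - 1) ^ δ * ‖x - y‖ ^ β) := by ring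
    · calc _ ≤ 2 * smoothingConst d α * F * ‖x - y‖ ^ β :=
            hf.abs_gaussIncrement_convolution_sub_le_of_exponent_le hα hαβ hβ1 hσ x y
        _ ≤ 8 * smoothingConst d α * F * ((σ - 1) ^ δ * ‖x - y‖ ^ β) := by
            gcongr
            · norm_num
            · exact le_mul_of_one_le_left (by positivity)
                (Real.one_le_rpow (by linarith) hδ0)

end Increment

section HolderNorm

variable {d : ℕ} {α β δ F : ℝ} {f : Euc d → ℝ}

lemma holderNorm_nonneg (d : ℕ) (α : ℝ) (f : Euc d → ℝ) : 0 ≤ holderNorm d α f :=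
  add_nonneg (Real.iSup_nonneg fun _ => abs_nonneg _)
    (Real.iSup_nonneg fun _ => div_nonneg (abs_nonneg _) (by positivity))

lemma rpow_norm_sub_pos {x y : Euc d} (hxy : x ≠ y) (α : ℝ) : 0 < ‖x - y‖ ^ α :=
  Real.rpow_pos_of_pos (norm_sub_pos_iff.2 hxy) α

lemma holderNorm_le {S L : ℝ} (hS : 0 ≤ S) (hL : 0 ≤ L) (hsup : ∀ x, |f x| ≤ S)
    (hholder : ∀ x y, |f x - f y| ≤ L * ‖x - y‖ ^ α) : holderNorm d α f ≤ S + L :=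
  add_le_add (Real.iSup_le hsup hS)
    (Real.iSup_le (fun q => (div_le_iff₀ (rpow_norm_sub_pos q.2 α)).2 (hholder _ _)) hL)

lemma boundedHolder_holderNorm (hα : 0 ≤ α) (hmeas : Measurable f) (hbdd : ∃ C, ∀ x, |f x| ≤ C)
    (hholder : 0 < α → ∃ C, ∀ x y, |f x - f y| ≤ C * ‖x - y‖ ^ α) :
    BoundedHolder f α (holderNorm d α f) := by
  refine ⟨hmeas, hbdd, fun x y => ?_, holderNorm_nonneg d α f⟩
  rcases eq_or_ne x y with rfl | hxy
  · rw [sub_self, abs_zero]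
    exact mul_nonneg (holderNorm_nonneg d α f) (by positivity)
  obtain ⟨C, hC⟩ : ∃ C, ∀ x y, |f x - f y| ≤ C * ‖x - y‖ ^ α := by
    rcases hα.lt_or_eq with h | rfl
    · exact hholder h
    · obtain ⟨C, hC⟩ := hbdd
      refine ⟨C + C, fun x y => ?_⟩
      rw [Real.rpow_zero, mul_one]
      exact (abs_sub _ _).trans (add_le_add (hC x) (hC y))
  have hquotients : BddAbove (range fun q : {q : Euc d × Euc d // q.1 ≠ q.2} =>
      |f q.1.1 - f q.1.2| / ‖q.1.1 - q.1.2‖ ^ α) :=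
    ⟨C, forall_mem_range.2 fun q => (div_le_iff₀ (rpow_norm_sub_pos q.2 α)).2 (hC _ _)⟩
  rw [← div_le_iff₀ (rpow_norm_sub_pos hxy α)]
  exact (le_ciSup hquotients ⟨(x, y), hxy⟩).trans
    (le_add_of_nonneg_left (Real.iSup_nonneg fun _ => abs_nonneg _))

lemma BoundedHolder.holderNorm_gaussDensity_increment_le (hf : BoundedHolder f α F) (hα : 0 ≤ α)
    (hβ0 : 0 ≤ β) (hβ1 : β ≤ 1) (hδ0 : 0 ≤ δ) (hδ1 : δ ≤ 1) (hδ_low : (α - β) / 2 ≤ δ)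
    {a b : ℝ} (ha : 0 < a) (hab : a ≤ b) :
    holderNorm d β (fun x => (gaussDensity d b ⋆ f) x - (gaussDensity d a ⋆ f) x) ≤
      8 * smoothingConst d α * (1 + b ^ (β / 2)) * (a ^ ((α - β) / 2) * (b / a - 1) ^ δ) * F := by
  have hF := hf.const_nonneg
  have hW := one_le_smoothingConst d α
  have hb : 0 < b := ha.trans_le hab
  have hσ : 1 ≤ b / a := (one_le_div ha).2 hab
  have hr : 0 < √a := Real.sqrt_pos.2 ha
  have hfr := hf.comp_smul hr.le
  have hscale : ∀ x, (gaussDensity d b ⋆ f) x - (gaussDensity d a ⋆ f) x =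
      (gaussIncrement d (b / a) ⋆ fun y => f (√a • y)) ((√a)⁻¹ • x) := by
    intro x
    rw [hfr.gaussDensity_sub_convolution one_pos (div_pos hb ha),
      ← convolution_gaussDensity_sq_mul hr one_pos,
      ← convolution_gaussDensity_sq_mul hr (div_pos hb ha), Real.sq_sqrt ha.le, mul_one,
      mul_div_cancel₀ _ ha.ne']
  have : 0 ≤ (b / a - 1) ^ δ := Real.rpow_nonneg (sub_nonneg.2 hσ) δ
  refine (holderNorm_le
    (S := 8 * smoothingConst d α * b ^ (β / 2) * (a ^ ((α - β) / 2) * (b / a - 1) ^ δ) * F)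
    (L := 8 * smoothingConst d α * (a ^ ((α - β) / 2) * (b / a - 1) ^ δ) * F)
    (by positivity) (by positivity) (fun x => ?_) fun x y => ?_).trans_eq (by ring)
  · have hpowers : √a ^ α * (b / a) ^ (β / 2) = b ^ (β / 2) * a ^ ((α - β) / 2) := by
      rw [← Real.rpow_div_two_eq_sqrt _ ha.le, Real.div_rpow hb.le ha.le, sub_div,
        Real.rpow_sub ha]
      ring
    rw [hscale]
    refine (hfr.abs_gaussIncrement_convolution_le hα hβ0 hδ0 hδ1 hδ_low hσ _).trans_eq ?_
    linear_combination 8 * smoothingConst d α * F * (b / a - 1) ^ δ * hpowers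
  · have hpowers := rpow_mul_norm_inv_smul_sub_rpow hr α β x y
    rw [← Real.rpow_div_two_eq_sqrt (α - β) ha.le] at hpowers
    rw [hscale, hscale]
    refine (hfr.abs_gaussIncrement_convolution_sub_le hα hβ0 hβ1 hδ0 hδ1 hδ_low hσ _ _).trans_eq ?_
    linear_combination 8 * smoothingConst d α * F * (b / a - 1) ^ δ * hpowers

end HolderNorm

section HeatOperator

variable {d : ℕ} {α β δ F c H s t : ℝ} {f : Euc d → ℝ}

lemma heatP_eq_convolution (c H t : ℝ) (f : Euc d → ℝ) (x : Euc d) :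
    heatP d c H t f x = (gaussDensity d (c * t ^ (2 * H)) ⋆ f) x := by
  rw [convolution_lsmul_swap]
  rfl

lemma variance_rpow_mul_ratio_rpow (α β δ : ℝ) (hc : 0 < c) (hH : 0 ≤ H) (hs : 0 < s)
    (hst : s ≤ t) :
    (c * s ^ (2 * H)) ^ ((α - β) / 2) * (c * t ^ (2 * H) / (c * s ^ (2 * H)) - 1) ^ δ =
      c ^ ((α - β) / 2) *
        (s ^ (H * (α - β) - 2 * H * δ) * |t ^ (2 * H) - s ^ (2 * H)| ^ δ) := by
  have hs_pos : 0 < s ^ (2 * H) := Real.rpow_pos_of_pos hs _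
  have hgap : 0 ≤ t ^ (2 * H) - s ^ (2 * H) :=
    sub_nonneg.2 (Real.rpow_le_rpow hs.le hst (by positivity))
  have hexponent : s ^ (H * (α - β) - 2 * H * δ) =
      (s ^ (2 * H)) ^ ((α - β) / 2) / (s ^ (2 * H)) ^ δ := by
    rw [← Real.rpow_mul hs.le, ← Real.rpow_mul hs.le, ← Real.rpow_sub hs]
    ring_nf
  rw [mul_div_mul_left _ _ hc.ne', div_sub_one hs_pos.ne', hexponent, abs_of_nonneg hgap,
    Real.div_rpow hgap hs_pos.le, Real.mul_rpow hc.le hs_pos.le]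
  ring

lemma BoundedHolder.holderNorm_heatP_sub_le (hf : BoundedHolder f α F) (hα : 0 ≤ α)
    (hβ0 : 0 ≤ β) (hβ1 : β ≤ 1) (hδ0 : 0 ≤ δ) (hδ1 : δ ≤ 1) (hδ_low : (α - β) / 2 ≤ δ)
    (hc : 0 < c) (hH : 0 ≤ H) (hs : 0 < s) (hst : s ≤ t) :
    holderNorm d β (fun x => heatP d c H t f x - heatP d c H s f x) ≤
      8 * smoothingConst d α * (1 + (c * t ^ (2 * H)) ^ (β / 2)) * c ^ ((α - β) / 2) *
        s ^ (H * (α - β) - 2 * H * δ) * |t ^ (2 * H) - s ^ (2 * H)| ^ δ * F := by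
  have hvariance : c * s ^ (2 * H) ≤ c * t ^ (2 * H) := by gcongr
  have hbound := hf.holderNorm_gaussDensity_increment_le hα hβ0 hβ1 hδ0 hδ1 hδ_low
    (mul_pos hc (Real.rpow_pos_of_pos hs _)) hvariance
  simp only [heatP_eq_convolution]
  rw [variance_rpow_mul_ratio_rpow α β δ hc hH hs hst] at hbound
  exact hbound.trans_eq (by ring)

end HeatOperator

theorem heat_time_regularity_estimate_general
    (d : ℕ) (H c : ℝ) (hH : 0 ≤ H) (hc : 0 < c)
    (α β δ : ℝ) (hα0 : 0 ≤ α) (hβ0 : 0 ≤ β) (hβ1 : β ≤ 1)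
    (hδ0 : 0 ≤ δ) (hδ_low : (α - β) / 2 ≤ δ) (hδ1 : δ ≤ 1) (T : ℝ) :
    ∃ N : ℝ, ∀ f : Euc d → ℝ,
      Measurable f → (∃ C, ∀ x, |f x| ≤ C) →
      (0 < α → ∃ C, ∀ x y, |f x - f y| ≤ C * ‖x - y‖ ^ α) →
      ∀ s t : ℝ, 0 < s → s ≤ t → t ≤ T →
        holderNorm d β (fun x => heatP d c H t f x - heatP d c H s f x)
          ≤ N * s ^ (H * (α - β) - 2 * H * δ)
              * |t ^ (2 * H) - s ^ (2 * H)| ^ δ * holderNorm d α f := by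
  refine ⟨8 * smoothingConst d α * (1 + (c * T ^ (2 * H)) ^ (β / 2)) * c ^ ((α - β) / 2),
    fun f hmeas hbdd hholder s t hs hst htT => ?_⟩
  have hf := boundedHolder_holderNorm hα0 hmeas hbdd hholder
  have hF := hf.const_nonneg
  have hW := one_le_smoothingConst d α
  have ht : 0 < t := hs.trans_le hst
  exact (hf.holderNorm_heatP_sub_le hα0 hβ0 hβ1 hδ0 hδ1 hδ_low hc hH hs hst).trans (by gcongr)

/-- **Time-regularity estimate for the Gaussian semigroup** (Lemma 3.3, (3.8)):
for `f ∈ C^α`, `δ ∈ [(α-β)/2, 1]`, `δ > 0`, and `0 < s ≤ t ≤ 1`,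
`‖P_t^H f - P_s^H f‖_{C^β} ≤ N s^{H(α-β) - 2Hδ} |t^{2H} - s^{2H}|^δ ‖f‖_{C^α}`,
where `N = N(H, c, α, β, δ, d)`. -/
theorem heat_time_regularity_estimate
    (d : ℕ) (H c : ℝ) (hH : 0 < H) (hc : 0 < c)
    (α β δ : ℝ) (hα0 : 0 ≤ α) (hα1 : α ≤ 1) (hβ0 : 0 ≤ β) (hβ1 : β ≤ 1)
    (hδ0 : 0 < δ) (hδ_low : (α - β) / 2 ≤ δ) (hδ1 : δ ≤ 1) :
    ∃ N : ℝ, ∀ f : Euc d → ℝ,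
      -- `f ∈ C^α` : bounded measurable, and `α`-Hölder when `α > 0`
      Measurable f → (∃ C, ∀ x, |f x| ≤ C) →
      (0 < α → ∃ C, ∀ x y, |f x - f y| ≤ C * ‖x - y‖ ^ α) →
      ∀ s t : ℝ, 0 < s → s ≤ t → t ≤ 1 →
        holderNorm d β (fun x => heatP d c H t f x - heatP d c H s f x)
          ≤ N * s ^ (H * (α - β) - 2 * H * δ)
              * |t ^ (2 * H) - s ^ (2 * H)| ^ δ * holderNorm d α f :=
  heat_time_regularity_estimate_general d H c hH.le hc α β δ hα0 hβ0 hβ1 hδ0.le hδ_low hδ1 1
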